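/- arXiv:2508.01420 — 2 statements merged into one kernel-verified Lean document; each statement's English description precedes it below -/
import Mathlib

section
/- Let E be a real Banach space, let M ⊆ E be an open and connected subset, and let δ : M → ℕ ∪ {∞} be an upper semicontinuous function. For d ∈ ℕ ∪ {∞} write M_d := δ⁻¹({d}). Assume that M_0 is open and dense in M, and that for every d ∈ ℕ ∪ {∞} with d ≥ 1 the set M_d has codimension at least 2 in M, in the following sense: every g ∈ M_d has an open neighborhood U ⊆ M and a C¹ map F : U → ℝ² whose Fréchet derivative is surjective at every point of U and which satisfies F(M_d ∩ U) = {0}. Then M_0 is connected. -/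
open Set

/-- Patching: local connectedness of the trace of `S` implies global connectedness. -/
theorem patch_aux {X : Type*} [TopologicalSpace X] (V S : Set X) (hV : IsOpen V)
    (hVc : IsPreconnected V) (hd : V ⊆ closure S)
    (hloc : ∀ g ∈ V, ∃ W : Set X, IsOpen W ∧ g ∈ W ∧ W ⊆ V ∧ IsPreconnected (W ∩ S)) :
    IsPreconnected (V ∩ S) := by
  intro u v hu hv huv hau hbv
  have hd' : V ⊆ closure (V ∩ S) := fun x hx => by
    rw [mem_closure_iff]
    intro o ho hxo
    obtain ⟨y, hy, hyS⟩ := mem_closure_iff.1 (hd hx) (o ∩ V) (ho.inter hV) ⟨hxo, hx⟩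
    exact ⟨y, hy.1, hy.2, hyS⟩
  have hcov : V ⊆ closure (V ∩ S ∩ u) ∪ closure (V ∩ S ∩ v) := by
    rw [← closure_union, ← inter_union_distrib_left, inter_eq_left.2 huv]
    exact hd'
  obtain ⟨a, ha, hau⟩ := hau
  obtain ⟨b, hb, hbv⟩ := hbv
  obtain ⟨g, hgV, hg1, hg2⟩ := isPreconnected_closed_iff.1 hVc _ _ isClosed_closure
    isClosed_closure hcov ⟨a, ha.1, subset_closure ⟨ha, hau⟩⟩ ⟨b, hb.1, subset_closure ⟨hb, hbv⟩⟩
  obtain ⟨W, hWo, hgW, hWV, hWc⟩ := hloc g hgV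
  obtain ⟨p, hpW, hp⟩ := mem_closure_iff.1 hg1 W hWo hgW
  obtain ⟨q, hqW, hq⟩ := mem_closure_iff.1 hg2 W hWo hgW
  obtain ⟨r, hr, hr'⟩ := hWc u v hu hv
    (fun x hx => huv ⟨hWV hx.1, hx.2⟩) ⟨p, ⟨hpW, hp.1.2⟩, hp.2⟩ ⟨q, ⟨hqW, hq.1.2⟩, hq.2⟩
  exact ⟨r, ⟨hWV hr.1, hr.2⟩, hr'⟩

theorem punctured_ball_aux (r : ℝ) :
    IsPreconnected (Metric.ball (0 : ℝ × ℝ) r ∩ {0}ᶜ) := by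
  have hrank : 1 < Module.rank ℝ (ℝ × ℝ) := by
    rw [← Module.finrank_eq_rank]
    simp
  have h := (isPreconnected_Ioo (a := (0 : ℝ)) (b := r)).prod
    (isPreconnected_sphere hrank (0 : ℝ × ℝ) 1)
  have h2 := h.image (fun p : ℝ × (ℝ × ℝ) => p.1 • p.2) (by fun_prop)
  convert h2 using 1
  ext x
  constructor
  · rintro ⟨hx, hx0⟩
    have hx0 : x ≠ 0 := hx0
    have hn : 0 < ‖x‖ := norm_pos_iff.2 hx0
    refine ⟨(‖x‖, ‖x‖⁻¹ • x), ⟨⟨hn, by simpa using hx⟩, ?_⟩, ?_⟩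
    · simp [norm_smul, hn.ne']
    · simp [smul_smul, hn.ne']
  · rintro ⟨⟨t, y⟩, ⟨⟨ht0, ht1⟩, hy⟩, rfl⟩
    simp only at ht0 ht1 hy ⊢
    have hy : ‖y‖ = 1 := by simpa using hy
    refine ⟨?_, ?_⟩
    · rw [mem_ball_zero_iff, norm_smul, hy, Real.norm_of_nonneg ht0.le, mul_one]
      exact ht1
    · intro h0
      have h0 : t • y = 0 := h0
      have := congrArg norm h0
      rw [norm_smul, hy, Real.norm_of_nonneg ht0.le] at this
      simp at this
      exact ht0.ne' this

theorem submersion_aux {E : Type*} [NormedAddCommGroup E] [NormedSpace ℝ E] [CompleteSpace E]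
    (F : E → ℝ × ℝ) (F' : E →L[ℝ] ℝ × ℝ) (g : E) (hF : HasStrictFDerivAt F F' g)
    (hs : Function.Surjective F') (hg : F g = 0) (N : Set E) (hN : IsOpen N) (hgN : g ∈ N) :
    ∃ W : Set E, IsOpen W ∧ g ∈ W ∧ W ⊆ N ∧ IsPreconnected (W ∩ {x | F x ≠ 0}) ∧
      W ⊆ closure (W ∩ {x | F x ≠ 0}) := by
  have hr : F'.range = ⊤ := LinearMap.range_eq_top.2 hs
  have hker := F'.ker_closedComplemented_of_finiteDimensional_range
  obtain ⟨e, hgs, he, heg⟩ : ∃ e : OpenPartialHomeomorph E ((ℝ × ℝ) × F'.ker),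
      g ∈ e.source ∧ (∀ x, (e x).1 = F x) ∧ e g = (0, 0) :=
    ⟨hF.implicitToOpenPartialHomeomorphOfComplemented F F' hr hker,
      hF.mem_implicitToOpenPartialHomeomorphOfComplemented_source hr hker,
      fun x => rfl, by simp [hg]⟩
  have hO : IsOpen (e.target ∩ e.symm ⁻¹' N) := e.isOpen_inter_preimage_symm hN
  have hmem : ((0 : ℝ × ℝ), (0 : F'.ker)) ∈ e.target ∩ e.symm ⁻¹' N := by
    rw [← heg]
    exact ⟨e.map_source hgs, by simpa [e.left_inv hgs] using hgN⟩
  obtain ⟨r, hr0, hball⟩ := Metric.isOpen_iff.1 hO _ hmem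
  rw [← ball_prod_same] at hball
  set B1 := Metric.ball (0 : ℝ × ℝ) r
  set B2 := Metric.ball (0 : F'.ker) r
  have hBt : B1 ×ˢ B2 ⊆ e.target := fun x hx => (hball hx).1
  have himg : e.symm '' (B1 ×ˢ B2) ∩ {x | F x ≠ 0} = e.symm '' ((B1 ∩ {0}ᶜ) ×ˢ B2) := by
    ext x
    constructor
    · rintro ⟨⟨p, hp, rfl⟩, hx⟩
      refine ⟨p, ⟨⟨hp.1, ?_⟩, hp.2⟩, rfl⟩
      have hx : F (e.symm p) ≠ 0 := hx
      rw [← he, e.right_inv (hBt hp)] at hx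
      exact hx
    · rintro ⟨p, hp, rfl⟩
      have hp' : p ∈ B1 ×ˢ B2 := ⟨hp.1.1, hp.2⟩
      refine ⟨⟨p, hp', rfl⟩, ?_⟩
      change F (e.symm p) ≠ 0
      rw [← he, e.right_inv (hBt hp')]
      exact hp.1.2
  have hcont : ContinuousOn e.symm (B1 ×ˢ B2) := e.continuousOn_symm.mono hBt
  have hsub : (B1 ∩ {0}ᶜ) ×ˢ B2 ⊆ B1 ×ˢ B2 := prod_mono inter_subset_left subset_rfl
  refine ⟨e.symm '' (B1 ×ˢ B2), e.isOpen_image_symm_of_subset_target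
    (Metric.isOpen_ball.prod Metric.isOpen_ball) hBt, ?_, ?_, ?_, ?_⟩
  · exact ⟨(0, 0), ⟨Metric.mem_ball_self hr0, Metric.mem_ball_self hr0⟩,
      by rw [← heg, e.left_inv hgs]⟩
  · rintro _ ⟨p, hp, rfl⟩
    exact (hball hp).2
  · rw [himg]
    have hB2 : IsPreconnected B2 := (convex_ball (0 : F'.ker) r).isPreconnected
    exact ((punctured_ball_aux r).prod hB2).image _ (hcont.mono hsub)
  · rw [himg]
    rintro _ ⟨p, hp, rfl⟩
    have hpc : p ∈ closure ((B1 ∩ {0}ᶜ) ×ˢ B2) := by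
      rw [closure_prod_eq]
      exact ⟨(dense_compl_singleton (0 : ℝ × ℝ)).open_subset_closure_inter
        Metric.isOpen_ball hp.1, subset_closure hp.2⟩
    exact ((hcont p hp).mono hsub).mem_closure_image hpc

/-- Let `M` be an open connected subset of a real Banach space together with an upper
semicontinuous function `δ : M → ℕ ∪ {∞}` with level sets `M_d = δ⁻¹({d})`. If `M_0` is
open and dense in `M`, and for every `d ≥ 1` the set `M_d` has codimension at least `2`
in `M` (in the sense of local `C¹` submersions to `ℝ²` vanishing on `M_d`), then `M_0`
is connected. -/
theorem connectedness_of_minimal_stratum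
    {E : Type*} [NormedAddCommGroup E] [NormedSpace ℝ E] [CompleteSpace E]
    (M : Set E) (hM_open : IsOpen M) (hM_conn : IsConnected M)
    (δ : E → ℕ∞) (hδ : UpperSemicontinuousOn δ M)
    (Md : ℕ∞ → Set E) (hMd : ∀ d : ℕ∞, Md d = {x ∈ M | δ x = d})
    (h0_open : IsOpen (Md 0)) (h0_dense : M ⊆ closure (Md 0))
    (hcodim : ∀ d : ℕ∞, 1 ≤ d → ∀ g ∈ Md d,
      ∃ U : Set E, IsOpen U ∧ g ∈ U ∧ U ⊆ M ∧
        ∃ (F : E → ℝ × ℝ) (F' : E → E →L[ℝ] ℝ × ℝ),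
          ContinuousOn F' U ∧
          (∀ x ∈ U, HasFDerivAt F (F' x) x) ∧
          (∀ x ∈ U, Function.Surjective (F' x)) ∧
          (∀ x ∈ Md d ∩ U, F x = 0)) :
    IsConnected (Md 0) := by
  have hlt : ∀ b : ℕ∞, IsOpen (M ∩ δ ⁻¹' Iio b) := fun b => by
    obtain ⟨u, hu, h⟩ := upperSemicontinuousOn_iff_preimage_Iio.1 hδ b
    rw [h]
    exact hM_open.inter hu
  have hloc : ∀ e : ℕ∞, ∀ g ∈ M, δ g = e → ∀ N : Set E, IsOpen N → g ∈ N →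
      ∃ W : Set E, IsOpen W ∧ g ∈ W ∧ W ⊆ N ∧ IsPreconnected (W ∩ Md 0) := by
    intro e
    induction e using WellFoundedLT.induction with
    | ind e ih =>
    intro g hgM hge N hN hgN
    rcases eq_or_ne e 0 with rfl | he0
    · have hg0 : g ∈ Md 0 := by rw [hMd]; exact ⟨hgM, hge⟩
      obtain ⟨r, hr, hb⟩ := Metric.isOpen_iff.1 (hN.inter h0_open) g ⟨hgN, hg0⟩
      refine ⟨Metric.ball g r, Metric.isOpen_ball, Metric.mem_ball_self hr,
        fun x hx => (hb hx).1, ?_⟩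
      rw [inter_eq_left.2 (fun x hx => (hb hx).2)]
      exact (convex_ball g r).isPreconnected
    · have hgm : g ∈ Md e := by rw [hMd]; exact ⟨hgM, hge⟩
      obtain ⟨U, hU, hgU, hUM, F, F', hF'c, hF, hsurj, hzero⟩ :=
        hcodim e (Order.one_le_iff_ne_zero.2 he0) g hgm

      obtain ⟨L, hL, hgL, hLe⟩ : ∃ L : Set E, IsOpen L ∧ g ∈ L ∧ ∀ x ∈ L, δ x ≤ e := by
        rcases eq_or_ne e ⊤ with rfl | het
        · exact ⟨univ, isOpen_univ, trivial, fun x _ => le_top⟩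
        · refine ⟨_, hlt (e + 1), ⟨hgM, ?_⟩, fun x hx => ?_⟩
          · change δ g < e + 1
            rw [hge]
            exact (ENat.lt_add_one_iff het).2 le_rfl
          · exact (ENat.lt_add_one_iff het).1 hx.2
      have hstrict : HasStrictFDerivAt F (F' g) g :=
        hasStrictFDerivAt_of_hasFDerivAt_of_continuousAt
          (Filter.eventually_of_mem (hU.mem_nhds hgU) hF) (hF'c.continuousAt (hU.mem_nhds hgU))
      obtain ⟨W, hW, hgW, hWN, hWc, hWd⟩ := submersion_aux F (F' g) g hstrict (hsurj g hgU)
        (hzero g ⟨hgm, hgU⟩) (N ∩ U ∩ L) ((hN.inter hU).inter hL) ⟨⟨hgN, hgU⟩, hgL⟩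
      refine ⟨W, hW, hgW, fun x hx => (hWN hx).1.1, ?_⟩
      set V := W ∩ (M ∩ δ ⁻¹' Iio e) with hVdef
      have hVo : IsOpen V := hW.inter (hlt e)
      have hVc : IsPreconnected V := by
        refine hWc.subset_closure (fun x hx => ?_) (fun x hx => hWd hx.1)
        have hxM : x ∈ M := hUM (hWN hx.1).1.2
        refine ⟨hx.1, hxM, lt_of_le_of_ne (hLe x (hWN hx.1).2) fun h => hx.2 ?_⟩
        exact hzero x ⟨by rw [hMd]; exact ⟨hxM, h⟩, (hWN hx.1).1.2⟩
      have hEq : W ∩ Md 0 = V ∩ Md 0 := by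
        ext x
        constructor
        · rintro ⟨hx, hx0⟩
          refine ⟨⟨hx, ?_⟩, hx0⟩
          rw [hMd] at hx0
          refine ⟨hx0.1, ?_⟩
          change δ x < e
          rw [hx0.2]
          exact pos_iff_ne_zero.2 he0
        · rintro ⟨hx, hx0⟩
          exact ⟨hx.1, hx0⟩
      rw [hEq]
      exact patch_aux V (Md 0) hVo hVc (fun x hx => h0_dense hx.2.1)
        fun x hx => ih (δ x) hx.2.2 x hx.2.1 rfl V hVo hx
  have hsub : Md 0 ⊆ M := by
    rw [hMd]
    exact fun x hx => hx.1
  refine ⟨?_, ?_⟩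
  · obtain ⟨x, hx⟩ := hM_conn.nonempty
    exact closure_nonempty_iff.1 ⟨x, h0_dense hx⟩
  · have := patch_aux M (Md 0) hM_open hM_conn.isPreconnected h0_dense
      fun x hx => hloc (δ x) x hx rfl M hM_open hx
    rwa [inter_eq_right.2 hsub] at this
end

section
/- Let E be a real Banach space, let U ⊆ E be an open connected subset, and let F : U → ℝ² be a C¹ map whose Fréchet derivative DF(x) : E → ℝ² is surjective at every point x ∈ U. Then the complement U \ F⁻¹({0}) of the zero set of F is dense in U and connected. -/
open Set

lemma aux_punctured (r : ℝ) (hr : 0 < r) :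
    IsPreconnected (Metric.ball (0 : ℝ × ℝ) r \ {0}) := by
  have hs : IsPreconnected (Metric.sphere (0 : ℝ × ℝ) 1) := by
    apply isPreconnected_sphere
    simp [one_add_one_eq_two]
  have hp : IsPreconnected (Ioo (0 : ℝ) r ×ˢ Metric.sphere (0 : ℝ × ℝ) 1) :=
    isPreconnected_Ioo.prod hs
  have := hp.image (fun p : ℝ × (ℝ × ℝ) => p.1 • p.2) (by fun_prop)
  convert this using 1
  ext x
  constructor
  · rintro ⟨hx, hx0⟩
    have hx0 : x ≠ 0 := hx0
    have hn : 0 < ‖x‖ := norm_pos_iff.2 hx0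
    refine ⟨(‖x‖, ‖x‖⁻¹ • x), ⟨⟨hn, by simpa using hx⟩, ?_⟩, ?_⟩
    · simp [norm_smul, hn.ne']
    · simp [smul_smul, hn.ne']
  · rintro ⟨⟨t, v⟩, ⟨⟨ht0, htr⟩, hv⟩, rfl⟩
    have hv1 : ‖v‖ = 1 := by simpa using hv
    dsimp only at ht0 htr ⊢
    have hv0 : v ≠ 0 := by
      rintro rfl
      simp at hv1
    refine ⟨?_, ?_⟩
    · rw [mem_ball_zero_iff, norm_smul, hv1, Real.norm_of_nonneg ht0.le]
      linarith
    · exact smul_ne_zero ht0.ne' hv0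

lemma aux_local
    {E : Type*} [NormedAddCommGroup E] [NormedSpace ℝ E] [CompleteSpace E]
    (U : Set E) (hU_open : IsOpen U)
    (F : E → ℝ × ℝ) (F' : E → E →L[ℝ] ℝ × ℝ)
    (hF'_cont : ContinuousOn F' U)
    (hF_deriv : ∀ x ∈ U, HasFDerivAt F (F' x) x)
    (hF'_surj : ∀ x ∈ U, Function.Surjective (F' x)) (x : E) (hx : x ∈ U) :
    ∃ W : Set E, IsOpen W ∧ x ∈ W ∧ IsPreconnected (W ∩ {x ∈ U | F x ≠ 0}) := by
  by_cases h0 : F x = 0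
  · have hstr : HasStrictFDerivAt F (F' x) x :=
      hasStrictFDerivAt_of_hasFDerivAt_of_continuousAt
        (Filter.eventually_of_mem (hU_open.mem_nhds hx) hF_deriv)
        (hF'_cont.continuousAt (hU_open.mem_nhds hx))
    have hr : (F' x).range = ⊤ := LinearMap.range_eq_top.2 (hF'_surj x hx)
    let e := hstr.implicitToOpenPartialHomeomorph F (F' x) hr
    have hfst : ∀ y, (e y).1 = F y := hstr.implicitToOpenPartialHomeomorph_fst hr
    have hself : e x = (0, 0) := by
      rw [← h0]; exact hstr.implicitToOpenPartialHomeomorph_self hr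
    have hxs : x ∈ e.source := hstr.mem_implicitToOpenPartialHomeomorph_source hr
    have hT : IsOpen (e.target ∩ e.symm ⁻¹' U) :=
      e.symm.isOpen_inter_preimage hU_open
    have hmem : ((0, 0) : (ℝ × ℝ) × (F' x).ker) ∈ e.target ∩ e.symm ⁻¹' U := by
      rw [← hself]
      refine ⟨e.map_source hxs, ?_⟩
      simpa [e.left_inv hxs] using hx
    obtain ⟨r, hr0, hball⟩ := Metric.isOpen_iff.1 hT _ hmem
    rw [← ball_prod_same] at hball
    let V : Set ((ℝ × ℝ) × (F' x).ker) := Metric.ball 0 r ×ˢ Metric.ball 0 r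
    have hVo : IsOpen V := Metric.isOpen_ball.prod Metric.isOpen_ball
    have hV : V ⊆ e.target ∩ e.symm ⁻¹' U := hball
    refine ⟨e.symm '' V, e.symm.isOpen_image_of_subset_source hVo (fun p hp => (hV hp).1),
      ⟨(0, 0), ⟨Metric.mem_ball_self hr0, Metric.mem_ball_self hr0⟩, ?_⟩, ?_⟩
    · rw [← hself, e.left_inv hxs]
    · have hpre : IsPreconnected
          ((Metric.ball (0 : ℝ × ℝ) r \ {0}) ×ˢ Metric.ball (0 : (F' x).ker) r) :=
        (aux_punctured r hr0).prod Metric.isPreconnected_ball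
      have hsub : ((Metric.ball (0 : ℝ × ℝ) r \ {0}) ×ˢ Metric.ball (0 : (F' x).ker) r) ⊆ V :=
        prod_mono sdiff_subset le_rfl
      have := hpre.image e.symm
        (e.continuousOn_symm.mono (fun p hp => (hV (hsub hp)).1))
      convert this using 1
      have key : ∀ p ∈ V, F (e.symm p) = p.1 := fun p hp => by
        rw [← hfst, e.right_inv (hV hp).1]
      ext y
      constructor
      · rintro ⟨⟨p, hp, rfl⟩, -, hne⟩
        rw [key p hp] at hne
        exact ⟨p, ⟨⟨hp.1, hne⟩, hp.2⟩, rfl⟩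
      · rintro ⟨p, hp, rfl⟩
        have hpV := hsub hp
        refine ⟨⟨p, hpV, rfl⟩, (hV hpV).2, ?_⟩
        rw [key p hpV]
        exact hp.1.2
  · have h1 : ∀ᶠ y in nhds x, y ∈ U ∧ F y ≠ 0 :=
      (hU_open.eventually_mem hx).and ((hF_deriv x hx).continuousAt.eventually_ne h0)
    obtain ⟨r, hr, hb⟩ := Metric.eventually_nhds_iff_ball.1 h1
    refine ⟨Metric.ball x r, Metric.isOpen_ball, Metric.mem_ball_self hr, ?_⟩
    have hsub : Metric.ball x r ⊆ {x ∈ U | F x ≠ 0} := hb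
    rw [inter_eq_left.2 hsub]
    exact Metric.isPreconnected_ball

/-- If `U` is an open connected subset of a real Banach space and `F : U → ℝ²` is a `C¹`
map whose Fréchet derivative is surjective at every point of `U`, then the complement of
the zero set of `F` in `U` is dense in `U` and connected. -/
theorem complement_of_submersion_zero_set_dense_and_connected
    {E : Type*} [NormedAddCommGroup E] [NormedSpace ℝ E] [CompleteSpace E]
    (U : Set E) (hU_open : IsOpen U) (hU_conn : IsConnected U)
    (F : E → ℝ × ℝ) (F' : E → E →L[ℝ] ℝ × ℝ)
    (hF'_cont : ContinuousOn F' U)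
    (hF_deriv : ∀ x ∈ U, HasFDerivAt F (F' x) x)
    (hF'_surj : ∀ x ∈ U, Function.Surjective (F' x)) :
    U ⊆ closure {x ∈ U | F x ≠ 0} ∧ IsConnected {x ∈ U | F x ≠ 0} := by
  have hdense : U ⊆ closure {x ∈ U | F x ≠ 0} := by
    intro x hx
    by_contra hcl
    have h1 : ∀ᶠ y in nhds x, F y = 0 := by
      filter_upwards [hU_open.mem_nhds hx, isClosed_closure.isOpen_compl.mem_nhds hcl]
        with y hyU hy
      by_contra hne
      exact hy (subset_closure ⟨hyU, hne⟩)
    have h2 : HasFDerivAt F (0 : E →L[ℝ] ℝ × ℝ) x :=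
      (hasFDerivAt_const (0 : ℝ × ℝ) x).congr_of_eventuallyEq h1
    obtain ⟨v, hv⟩ := hF'_surj x hx (1, 1)
    rw [(hF_deriv x hx).unique h2] at hv
    simp [Prod.ext_iff] at hv
  refine ⟨hdense, ?_, ?_⟩
  · obtain ⟨x, hx⟩ := hU_conn.nonempty
    exact closure_nonempty_iff.1 ⟨x, hdense hx⟩
  · rw [isPreconnected_iff_subset_of_disjoint]
    intro A B hA hB hAB hdisj
    set S := {x ∈ U | F x ≠ 0} with hS
    let G : Set E → Set E := fun A => ⋃₀ {W | IsOpen W ∧ W ∩ S ⊆ A}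
    have hG : ∀ A, IsOpen (G A) := fun A => isOpen_sUnion fun W hW => hW.1
    have hGS : ∀ A, U ⊆ G A → S ⊆ A := by
      intro A h y hy
      obtain ⟨W, hW, hyW⟩ := h hy.1
      exact hW.2 ⟨hyW, hy⟩
    have hcov : U ⊆ G A ∪ G B := by
      intro x hx
      obtain ⟨W, hWo, hxW, hWc⟩ :=
        aux_local U hU_open F F' hF'_cont hF_deriv hF'_surj x hx
      have := isPreconnected_iff_subset_of_disjoint.1 hWc A B hA hB
        (inter_subset_right.trans hAB)
        (subset_empty_iff.1 (hdisj ▸ inter_subset_inter_left _ inter_subset_right))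
      rcases this with h | h
      · exact Or.inl ⟨W, ⟨hWo, h⟩, hxW⟩
      · exact Or.inr ⟨W, ⟨hWo, h⟩, hxW⟩
    have hdis : U ∩ (G A ∩ G B) = ∅ := by
      rw [eq_empty_iff_forall_notMem]
      rintro x ⟨hxU, ⟨W, hW, hxW⟩, W', hW', hxW'⟩
      obtain ⟨y, hy, hyS⟩ := mem_closure_iff.1 (hdense hxU) (W ∩ W') (hW.1.inter hW'.1) ⟨hxW, hxW'⟩
      have : y ∈ S ∩ (A ∩ B) := ⟨hyS, hW.2 ⟨hy.1, hyS⟩, hW'.2 ⟨hy.2, hyS⟩⟩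
      rw [hdisj] at this
      exact this
    exact (isPreconnected_iff_subset_of_disjoint.1 hU_conn.isPreconnected _ _ (hG A) (hG B)
      hcov hdis).imp (hGS A) (hGS B)
end
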